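/- The n-shuffle product ш̄ on H is commutative and associative: for all w1, w2, w3 ∈ H one has w1 ш̄ w2 = w2 ш̄ w1 and (w1 ш̄ w2) ш̄ w3 = w1 ш̄ (w2 ш̄ w3). -/

import Mathlib

open scoped BigOperators

/-- The two-letter alphabet {x, y}. -/
inductive Letter : Type
  | x : Letter
  | y : Letter
deriving DecidableEq

/-- `H = ℚ⟨x,y⟩`, the noncommutative polynomial ring over ℚ in two
indeterminates, realized as the monoid algebra of the free monoid on `{x,y}`. -/
abbrev H : Type := MonoidAlgebra ℚ (FreeMonoid Letter)

namespace H

/-- The monomial (word) of `H` corresponding to an element of the free monoid. -/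
noncomputable def word (w : FreeMonoid Letter) : H := MonoidAlgebra.single w 1

/-- The generator `x`. -/
noncomputable def X : H := word (FreeMonoid.of Letter.x)

/-- The generator `y`. -/
noncomputable def Y : H := word (FreeMonoid.of Letter.y)

/-- The word `z_k = x^{k-1} y` (for `k ≥ 1`). -/
def zW (k : ℕ) : FreeMonoid Letter :=
  FreeMonoid.ofList (List.replicate (k - 1) Letter.x ++ [Letter.y])

/-- `z_k = x^{k-1} y` as an element of `H`. -/
noncomputable def z (k : ℕ) : H := word (zW k)

/-- A list `[k₁,…,kₙ]` gives the word `z_{k₁} z_{k₂} ⋯ z_{kₙ}`. -/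
def zListW (ks : List ℕ) : FreeMonoid Letter :=
  FreeMonoid.ofList (ks.flatMap fun k => List.replicate (k - 1) Letter.x ++ [Letter.y])

/-- `H¹ = ℚ + Hy` as a ℚ-submodule of `H`. -/
noncomputable def H1 : Submodule ℚ H :=
  LinearMap.range (LinearMap.mulRight ℚ Y) ⊔ Submodule.span ℚ {1}

/-- `H⁰ = ℚ + xHy` as a ℚ-submodule of `H`. -/
noncomputable def H0 : Submodule ℚ H :=
  LinearMap.range ((LinearMap.mulRight ℚ Y).comp (LinearMap.mulLeft ℚ X)) ⊔
    Submodule.span ℚ {1}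

/-- Parse a word of `H¹` into the exponent list of its `z`-decomposition:
`z_{k₁}⋯z_{kₙ} ↦ [k₁,…,kₙ]` (auxiliary accumulator version). -/
def toZAux : List Letter → ℕ → List ℕ
  | [], _ => []
  | Letter.x :: r, n => toZAux r (n + 1)
  | Letter.y :: r, n => (n + 1) :: toZAux r 0

/-- The `z`-decomposition of a word of `H¹`. -/
def toZ (w : FreeMonoid Letter) : List ℕ := toZAux (FreeMonoid.toList w) 0

/-- The harmonic product on words of `H¹` (via `z`-decompositions):
`1 * w = w * 1 = w` and
`z_k w₁ * z_l w₂ = z_k (w₁ * z_l w₂) + z_l (z_k w₁ * w₂) + z_{k+l} (w₁ * w₂)`. -/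
noncomputable def harmW : List ℕ → List ℕ → H
  | [], w => word (zListW w)
  | k :: w1, [] => word (zListW (k :: w1))
  | k :: w1, l :: w2 =>
      z k * harmW w1 (l :: w2) + z l * harmW (k :: w1) w2 + z (k + l) * harmW w1 w2
termination_by w1 w2 => w1.length + w2.length
decreasing_by all_goals simp [Nat.lt_succ_iff] <;> omega

/-- The n-harmonic product on words of `H¹`:
`1 *̄ w = w *̄ 1 = w` and
`z_k w₁ *̄ z_l w₂ = z_k (w₁ *̄ z_l w₂) + z_l (z_k w₁ *̄ w₂) − z_{k+l} (w₁ *̄ w₂)`. -/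
noncomputable def nharmW : List ℕ → List ℕ → H
  | [], w => word (zListW w)
  | k :: w1, [] => word (zListW (k :: w1))
  | k :: w1, l :: w2 =>
      z k * nharmW w1 (l :: w2) + z l * nharmW (k :: w1) w2 - z (k + l) * nharmW w1 w2
termination_by w1 w2 => w1.length + w2.length
decreasing_by all_goals simp [Nat.lt_succ_iff] <;> omega

/-- The harmonic product `*` on `H¹`, extended ℚ-bilinearly. -/
noncomputable def harm (a b : H) : H :=
  Finsupp.sum a.coeff fun w1 c1 =>
    Finsupp.sum b.coeff fun w2 c2 => (c1 * c2) • harmW (toZ w1) (toZ w2)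

/-- The n-harmonic product `*̄` on `H¹`, extended ℚ-bilinearly. -/
noncomputable def nharm (a b : H) : H :=
  Finsupp.sum a.coeff fun w1 c1 =>
    Finsupp.sum b.coeff fun w2 c2 => (c1 * c2) • nharmW (toZ w1) (toZ w2)

/-- The letter exchange `τ(x) = y`, `τ(y) = x`. -/
def τ : Letter → Letter
  | Letter.x => Letter.y
  | Letter.y => Letter.x

/-- `δ(w) = 1` if `w` is the empty word, `0` otherwise. -/
def δ : List Letter → ℚ
  | [] => 1
  | _ :: _ => 0

/-- The shuffle product on words:
`1 ш w = w ш 1 = w` and `u₁w₁ ш u₂w₂ = u₁(w₁ ш u₂w₂) + u₂(u₁w₁ ш w₂)`. -/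
noncomputable def shW : List Letter → List Letter → H
  | [], w => word (FreeMonoid.ofList w)
  | u :: w, [] => word (FreeMonoid.ofList (u :: w))
  | u1 :: w1, u2 :: w2 =>
      word (FreeMonoid.of u1) * shW w1 (u2 :: w2) +
        word (FreeMonoid.of u2) * shW (u1 :: w1) w2
termination_by w1 w2 => w1.length + w2.length
decreasing_by all_goals simp [Nat.lt_succ_iff]

/-- The n-shuffle product on words: `1 ш̄ w = w ш̄ 1 = w` and
`u₁w₁ ш̄ u₂w₂ = u₁(w₁ ш̄ u₂w₂) + u₂(u₁w₁ ш̄ w₂) − δ(w₁)τ(u₁)u₂w₂ − δ(w₂)τ(u₂)u₁w₁`. -/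
noncomputable def nshW : List Letter → List Letter → H
  | [], w => word (FreeMonoid.ofList w)
  | u :: w, [] => word (FreeMonoid.ofList (u :: w))
  | u1 :: w1, u2 :: w2 =>
      word (FreeMonoid.of u1) * nshW w1 (u2 :: w2) +
        word (FreeMonoid.of u2) * nshW (u1 :: w1) w2 -
        δ w1 • word (FreeMonoid.ofList (τ u1 :: u2 :: w2)) -
        δ w2 • word (FreeMonoid.ofList (τ u2 :: u1 :: w1))
termination_by w1 w2 => w1.length + w2.length
decreasing_by all_goals simp [Nat.lt_succ_iff]

/-- The shuffle product `ш` on `H`, extended ℚ-bilinearly. -/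
noncomputable def sh (a b : H) : H :=
  Finsupp.sum a.coeff fun w1 c1 =>
    Finsupp.sum b.coeff fun w2 c2 =>
      (c1 * c2) • shW (FreeMonoid.toList w1) (FreeMonoid.toList w2)

/-- The n-shuffle product `ш̄` on `H`, extended ℚ-bilinearly. -/
noncomputable def nsh (a b : H) : H :=
  Finsupp.sum a.coeff fun w1 c1 =>
    Finsupp.sum b.coeff fun w2 c2 =>
      (c1 * c2) • nshW (FreeMonoid.toList w1) (FreeMonoid.toList w2)

/-- `S₁`: the ℚ-algebra endomorphism of `H` with `S₁(x) = x`, `S₁(y) = x + y`. -/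
noncomputable def S1 : H →ₐ[ℚ] H :=
  MonoidAlgebra.lift ℚ H (FreeMonoid Letter)
    (FreeMonoid.lift fun u => match u with
      | Letter.x => X
      | Letter.y => X + Y)

/-- `S₂`: the ℚ-algebra endomorphism of `H` with `S₂(x) = x`, `S₂(y) = y − x`. -/
noncomputable def S2 : H →ₐ[ℚ] H :=
  MonoidAlgebra.lift ℚ H (FreeMonoid Letter)
    (FreeMonoid.lift fun u => match u with
      | Letter.x => X
      | Letter.y => Y - X)

/-- `S` on a word: `S(1) = 1` and `S(Fy) = S₁(F)y`. -/
noncomputable def SW (w : FreeMonoid Letter) : H :=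
  match (FreeMonoid.toList w).getLast? with
  | some Letter.y =>
      S1 (word (FreeMonoid.ofList (FreeMonoid.toList w).dropLast)) * Y
  | _ => word w

/-- The ℚ-linear map `S : H¹ → H¹` with `S(1) = 1`, `S(Fy) = S₁(F)y`. -/
noncomputable def S (a : H) : H := Finsupp.sum a.coeff fun w c => c • SW w

/-- `S̃` on a word: `S̃(1) = 1` and `S̃(Fy) = S₂(F)y`. -/
noncomputable def StW (w : FreeMonoid Letter) : H :=
  match (FreeMonoid.toList w).getLast? with
  | some Letter.y =>
      S2 (word (FreeMonoid.ofList (FreeMonoid.toList w).dropLast)) * Y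
  | _ => word w

/-- The ℚ-linear map `S̃ : H¹ → H¹` with `S̃(1) = 1`, `S̃(Fy) = S₂(F)y`. -/
noncomputable def St (a : H) : H := Finsupp.sum a.coeff fun w c => c • StW w

/-- The multiple zeta value `ζ(k₁,…,kₙ)`: the sum over strictly decreasing
tuples `m₁ > m₂ > ⋯ > mₙ > 0` of `1/(m₁^{k₁}⋯mₙ^{kₙ})`. -/
noncomputable def mzeta (ks : List ℕ) : ℝ :=
  ∑' m : {f : Fin ks.length → ℕ // (∀ i, 0 < f i) ∧
      ∀ i j : Fin ks.length, i < j → f j < f i},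
    ∏ i : Fin ks.length, ((m.1 i : ℝ) ^ ks.get i)⁻¹

/-- The non-strict multiple zeta value `ζ̄(k₁,…,kₙ)`: the sum over weakly
decreasing tuples `m₁ ≥ m₂ ≥ ⋯ ≥ mₙ > 0` of `1/(m₁^{k₁}⋯mₙ^{kₙ})`. -/
noncomputable def nmzeta (ks : List ℕ) : ℝ :=
  ∑' m : {f : Fin ks.length → ℕ // (∀ i, 0 < f i) ∧
      ∀ i j : Fin ks.length, i ≤ j → f j ≤ f i},
    ∏ i : Fin ks.length, ((m.1 i : ℝ) ^ ks.get i)⁻¹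

/-- The evaluation map `Z : H⁰ → ℝ`, `Z(1) = 1`,
`Z(z_{k₁}⋯z_{kₙ}) = ζ(k₁,…,kₙ)` (extended ℚ-linearly to `H`). -/
noncomputable def Z (a : H) : ℝ := Finsupp.sum a.coeff fun w c => (c : ℝ) * mzeta (toZ w)

/-- The n-evaluation map `Z̄ : H⁰ → ℝ`, `Z̄(1) = 1`,
`Z̄(z_{k₁}⋯z_{kₙ}) = ζ̄(k₁,…,kₙ)` (extended ℚ-linearly to `H`). -/
noncomputable def Zbar (a : H) : ℝ := Finsupp.sum a.coeff fun w c => (c : ℝ) * nmzeta (toZ w)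

/-- `i`-fold n-harmonic power: `a^{*̄ 0} = 1`, `a^{*̄ (i+1)} = a *̄ a^{*̄ i}`. -/
noncomputable def nharmPow : ℕ → H → H
  | 0, _ => 1
  | i + 1, a => nharm a (nharmPow i a)

/-- `i`-fold n-shuffle power: `a^{ш̄ 0} = 1`, `a^{ш̄ (i+1)} = a ш̄ a^{ш̄ i}`. -/
noncomputable def nshPow : ℕ → H → H
  | 0, _ => 1
  | i + 1, a => nsh a (nshPow i a)

end H

namespace H

theorem W_cons (u : Letter) (l : List Letter) :
    word (FreeMonoid.ofList (u :: l)) = word (FreeMonoid.of u) * word (FreeMonoid.ofList l) := by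
  simp [word, MonoidAlgebra.single_mul_single, FreeMonoid.ofList_cons]

theorem nsh_add_left (a a' b : H) : nsh (a + a') b = nsh a b + nsh a' b := by
  unfold nsh
  rw [MonoidAlgebra.coeff_add]
  refine Finsupp.sum_add_index' (by simp) ?_
  intro w c c'
  rw [← Finsupp.sum_add]
  simp only [add_mul, add_smul]

theorem nsh_smul_left (r : ℚ) (a b : H) : nsh (r • a) b = r • nsh a b := by
  unfold nsh
  rw [MonoidAlgebra.coeff_smul, Finsupp.sum_smul_index (by simp), Finsupp.smul_sum]
  simp only [Finsupp.smul_sum, mul_assoc, mul_smul]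

theorem nsh_add_right (a b b' : H) : nsh a (b + b') = nsh a b + nsh a b' := by
  unfold nsh
  rw [MonoidAlgebra.coeff_add, ← Finsupp.sum_add]
  refine Finsupp.sum_congr fun w _ => ?_
  exact Finsupp.sum_add_index' (by simp) (by intros; simp only [mul_add, add_smul])

theorem nsh_smul_right (r : ℚ) (a b : H) : nsh a (r • b) = r • nsh a b := by
  unfold nsh
  rw [MonoidAlgebra.coeff_smul, Finsupp.smul_sum]
  refine Finsupp.sum_congr fun w _ => ?_
  rw [Finsupp.sum_smul_index (by simp), Finsupp.smul_sum]
  refine Finsupp.sum_congr fun w _ => ?_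
  rw [smul_smul]; congr 1; ring

/-- The n-shuffle product as a bilinear map. -/
noncomputable def M : H →ₗ[ℚ] H →ₗ[ℚ] H :=
  LinearMap.mk₂ ℚ nsh nsh_add_left nsh_smul_left nsh_add_right nsh_smul_right

theorem M_apply (a b : H) : M a b = nsh a b := rfl

theorem M_word (l m : List Letter) :
    M (word (FreeMonoid.ofList l)) (word (FreeMonoid.ofList m)) = nshW l m := by
  rw [M_apply]; unfold nsh word
  simp [MonoidAlgebra.coeff_single]

/-- The coefficient of the empty word. -/
noncomputable def eta : H →ₗ[ℚ] ℚ where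
  toFun a := a.coeff 1
  map_add' a b := by simp
  map_smul' r a := by simp

theorem eta_word (l : List Letter) : eta (word (FreeMonoid.ofList l)) = δ l := by
  cases l with
  | nil =>
    show (MonoidAlgebra.single (1 : FreeMonoid Letter) (1 : ℚ)).coeff 1 = 1
    rw [MonoidAlgebra.coeff_single, Finsupp.single_eq_same]
  | cons u l =>
    show (MonoidAlgebra.single _ (1 : ℚ)).coeff 1 = 0
    rw [MonoidAlgebra.coeff_single]
    refine Finsupp.single_eq_of_ne ?_
    intro h
    exact List.cons_ne_nil u l (congrArg FreeMonoid.toList h).symm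

theorem ind {p : H → Prop} (hw : ∀ l, p (word (FreeMonoid.ofList l)))
    (ha : ∀ a b, p a → p b → p (a + b)) (hs : ∀ (r : ℚ) a, p a → p (r • a)) (a : H) : p a := by
  induction a using MonoidAlgebra.induction_linear with
  | zero => simpa using hs 0 _ (hw [])
  | add f g hf hg => exact ha f g hf hg
  | single w r =>
    have := hs r _ (hw (FreeMonoid.toList w))
    simpa [word] using this

/-- a letter as an element of `H` -/
noncomputable abbrev L (u : Letter) : H := word (FreeMonoid.of u)

theorem eta_mul (u : Letter) (a : H) : eta (L u * a) = 0 := by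
  induction a using ind with
  | hw l => rw [← W_cons, eta_word]; rfl
  | ha a b h1 h2 => rw [mul_add, map_add, h1, h2, add_zero]
  | hs r a h => rw [mul_smul_comm, map_smul, h, smul_zero]

theorem M_rec (u v : Letter) (a b : H) :
    M (L u * a) (L v * b) = L u * M a (L v * b) + L v * M (L u * a) b
      - eta a • (L (τ u) * (L v * b)) - eta b • (L (τ v) * (L u * a)) := by
  induction a using ind with
  | hw l =>
    induction b using ind with
    | hw m =>
      simp only [eta_word, ← W_cons, M_word]
      rw [nshW]
    | ha a b h1 h2 =>
      simp only [mul_add, map_add, h1, h2, add_smul, smul_add]; abel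
    | hs r a h =>
      simp only [mul_smul_comm, map_smul, h, smul_sub, smul_add, smul_eq_mul, mul_smul]
      rw [smul_comm r (eta _)]
  | ha a b h1 h2 =>
    simp only [mul_add, map_add, LinearMap.add_apply, h1, h2, add_smul, smul_add]; abel
  | hs r a h =>
    simp only [mul_smul_comm, map_smul, LinearMap.smul_apply, h, smul_sub, smul_add, smul_eq_mul,
      mul_smul]
    rw [smul_comm r (eta b)]

theorem M_nil_left (a : H) : M (word (FreeMonoid.ofList [])) a = a := by
  induction a using ind with
  | hw l => rw [M_word, nshW]
  | ha a b h1 h2 => rw [map_add, h1, h2]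
  | hs r a h => rw [map_smul, h]

theorem M_comm_word (n : ℕ) : ∀ l m : List Letter, l.length + m.length ≤ n →
    M (word (FreeMonoid.ofList l)) (word (FreeMonoid.ofList m)) =
    M (word (FreeMonoid.ofList m)) (word (FreeMonoid.ofList l)) := by
  induction n with
  | zero =>
    intro l m h
    obtain rfl : l = [] := List.eq_nil_of_length_eq_zero (by omega)
    obtain rfl : m = [] := List.eq_nil_of_length_eq_zero (by simpa using h)
    rfl
  | succ n ih =>
    intro l m h
    rcases l with _ | ⟨u, l⟩
    · cases m <;> simp only [M_word, nshW]
    rcases m with _ | ⟨v, m⟩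
    · simp only [M_word, nshW]
    simp only [List.length_cons] at h
    have h1 := ih l (v :: m) (by simp; omega)
    have h2 := ih (u :: l) m (by simp; omega)
    simp only [W_cons] at h1 h2 ⊢
    rw [M_rec, M_rec, h1, h2]; abel

theorem M_comm (a b : H) : M a b = M b a := by
  induction a using ind with
  | hw l =>
    induction b using ind with
    | hw m => exact M_comm_word _ l m le_rfl
    | ha a b h1 h2 => simp only [map_add, LinearMap.add_apply, h1, h2]
    | hs r a h => simp only [map_smul, LinearMap.smul_apply, h]
  | ha a b h1 h2 => simp only [map_add, LinearMap.add_apply, h1, h2]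
  | hs r a h => simp only [map_smul, LinearMap.smul_apply, h]

theorem M_nil_right (a : H) : M a (word (FreeMonoid.ofList [])) = a := by
  rw [M_comm, M_nil_left]

theorem eta_M_right (a : H) (v : Letter) (b : H) : eta (M a (L v * b)) = 0 := by
  induction a using ind with
  | hw l =>
    rcases l with _ | ⟨u, l⟩
    · rw [M_nil_left, eta_mul]
    · rw [W_cons, M_rec]; simp [eta_mul]
  | ha a b h1 h2 => simp only [map_add, LinearMap.add_apply, h1, h2, add_zero]
  | hs r a h => simp only [map_smul, LinearMap.smul_apply, h, smul_zero]

theorem eta_M_left (a : H) (v : Letter) (b : H) : eta (M (L v * b) a) = 0 := by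
  rw [M_comm, eta_M_right]

/-- Expansion of the left-bracketed triple product. -/
theorem M_triple (u v w : Letter) (a b c : H) :
    M (M (L u * a) (L v * b)) (L w * c) =
      L u * M (M a (L v * b)) (L w * c) + L v * M (M (L u * a) b) (L w * c)
      + L w * M (M (L u * a) (L v * b)) c
      - eta a • (L (τ u) * M (L v * b) (L w * c))
      - eta b • (L (τ v) * M (L u * a) (L w * c))
      - eta c • (L (τ w) * M (L u * a) (L v * b)) := by
  have key := M_rec u v a b
  have k2 : L w * M (M (L u * a) (L v * b)) c = L w * M (L u * M a (L v * b)) c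
      + L w * M (L v * M (L u * a) b) c
      - eta a • (L w * M (L (τ u) * (L v * b)) c) - eta b • (L w * M (L (τ v) * (L u * a)) c) := by
    rw [key]
    simp only [map_add, map_sub, map_smul, LinearMap.add_apply, LinearMap.sub_apply,
      LinearMap.smul_apply, mul_add, mul_sub, mul_smul_comm]
  have k3 : L (τ w) * M (L u * a) (L v * b) = L (τ w) * (L u * M a (L v * b))
      + L (τ w) * (L v * M (L u * a) b)
      - eta a • (L (τ w) * (L (τ u) * (L v * b))) - eta b • (L (τ w) * (L (τ v) * (L u * a))) := by
    rw [key]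
    simp only [mul_add, mul_sub, mul_smul_comm]
  rw [k2, k3, key]
  simp only [map_add, map_sub, map_smul, LinearMap.add_apply, LinearMap.sub_apply,
    LinearMap.smul_apply]
  rw [M_rec u w, M_rec v w, M_rec (τ u) w, M_rec (τ v) w]
  simp only [eta_M_right, eta_M_left, eta_mul]
  module

/-- Expansion of the right-bracketed triple product. -/
theorem M_triple_right (u v w : Letter) (a b c : H) :
    M (L u * a) (M (L v * b) (L w * c)) =
      L u * M a (M (L v * b) (L w * c)) + L v * M (L u * a) (M b (L w * c))
      + L w * M (L u * a) (M (L v * b) c)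
      - eta a • (L (τ u) * M (L v * b) (L w * c))
      - eta b • (L (τ v) * M (L u * a) (L w * c))
      - eta c • (L (τ w) * M (L u * a) (L v * b)) := by
  rw [M_comm (L u * a) (M (L v * b) (L w * c)), M_triple, M_comm (M (L v * b) (L w * c)) a,
    M_comm (M b (L w * c)) (L u * a), M_comm (M (L v * b) c) (L u * a),
    M_comm (L w * c) (L u * a), M_comm (L v * b) (L u * a)]
  abel

theorem M_assoc_word (n : ℕ) : ∀ l m k : List Letter, l.length + m.length + k.length ≤ n →
    M (M (word (FreeMonoid.ofList l)) (word (FreeMonoid.ofList m))) (word (FreeMonoid.ofList k)) =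
    M (word (FreeMonoid.ofList l))
      (M (word (FreeMonoid.ofList m)) (word (FreeMonoid.ofList k))) := by
  induction n with
  | zero =>
    intro l m k h
    obtain rfl : l = [] := List.eq_nil_of_length_eq_zero (by omega)
    simp only [M_nil_left]
  | succ n ih =>
    intro l m k h
    rcases l with _ | ⟨u, l⟩
    · simp only [M_nil_left]
    rcases m with _ | ⟨v, m⟩
    · simp only [M_nil_left, M_nil_right]
    rcases k with _ | ⟨w, k⟩
    · simp only [M_nil_right]
    simp only [List.length_cons] at h
    have h1 := ih l (v :: m) (w :: k) (by simp; omega)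
    have h2 := ih (u :: l) m (w :: k) (by simp; omega)
    have h3 := ih (u :: l) (v :: m) k (by simp; omega)
    simp only [W_cons] at h1 h2 h3 ⊢
    rw [M_triple, h1, h2, h3, M_triple_right]

theorem M_assoc (a b c : H) : M (M a b) c = M a (M b c) := by
  induction a using ind with
  | hw l =>
    induction b using ind with
    | hw m =>
      induction c using ind with
      | hw k => exact M_assoc_word _ l m k le_rfl
      | ha a b h1 h2 => simp only [map_add, h1, h2]
      | hs r a h => simp only [map_smul, h]
    | ha a b h1 h2 => simp only [map_add, LinearMap.add_apply, h1, h2]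
    | hs r a h => simp only [map_smul, LinearMap.smul_apply, h]
  | ha a b h1 h2 => simp only [map_add, LinearMap.add_apply, h1, h2]
  | hs r a h => simp only [map_smul, LinearMap.smul_apply, h]

end H

open H

/-- The n-shuffle product `ш̄` on `H` is commutative and associative. -/
theorem nsh_comm_and_assoc :
    (∀ w1 w2 : H, nsh w1 w2 = nsh w2 w1) ∧
    (∀ w1 w2 w3 : H, nsh (nsh w1 w2) w3 = nsh w1 (nsh w2 w3)) :=
  ⟨M_comm, M_assoc⟩
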